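/- Fix real numbers λ₁ > λ₂ > λ₃ > λ₄ with λᵢ+λⱼ > 0 for all i ≠ j, set Σ = λ₁+λ₂+λ₃+λ₄ (which is positive) and m₀ = n₀ = −1/Σ, and define V : ℝ⁶ → ℝ by V = H + m₀C₁ + n₀C₂, where H(x,y) = (1/2)[x₁²/(λ₂+λ₃) + x₂²/(λ₁+λ₃) + x₃²/(λ₁+λ₂) + y₁²/(λ₁+λ₄) + y₂²/(λ₂+λ₄) + y₃²/(λ₃+λ₄)], C₁(x,y) = (1/2)Σᵢ(xᵢ²+yᵢ²), C₂(x,y) = Σᵢ xᵢyᵢ. Then: (i) the gradient ∇V vanishes at every point of s₊, i.e. at every point (a₁/(λ₁+λ₄), a₂/(λ₂+λ₄), a₃/(λ₃+λ₄), a₁/(λ₂+λ₃), a₂/(λ₁+λ₃), a₃/(λ₁+λ₂)) with (a₁,a₂,a₃) ∈ ℝ³; (ii) the (constant) Hessian matrix of V has characteristic polynomial t³(t−α₁)(t−α₂)(t−α₃), where α₁ = [(λ₁+λ₃)²+(λ₂+λ₄)²]/[(λ₁+λ₃)(λ₂+λ₄)Σ] > 0, α₂ = [(λ₁+λ₄)²+(λ₂+λ₃)²]/[(λ₁+λ₄)(λ₂+λ₃)Σ]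 > 0, α₃ = [(λ₁+λ₂)²+(λ₃+λ₄)²]/[(λ₁+λ₂)(λ₃+λ₄)Σ] > 0; in particular the Hessian of V is positive semidefinite with three-dimensional kernel. -/

import Mathlib

/-!
In the coordinates `(xₖ, yₖ)`, `k = 1, 2, 3`, the quadratic form `V` splits into three binary forms.
If `H` contains `xₖ²/(2u) + yₖ²/(2v)`, then `u + v = Σ` for each
`k`, so the `k`-th block of the Hessian is
`[[1/u - 1/Σ, -1/Σ], [-1/Σ, 1/v - 1/Σ]] = (uvΣ)⁻¹ (v, -u)ᵀ(v, -u)`.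
It has rank one, nonzero eigenvalue equal to its trace `(u² + v²)/(uvΣ)`, and kernel spanned
by `(1/v, 1/u)`, which is the `k`-th direction of `s₊`.

`fderiv_V` and `hessV_eq` identify the derivative and the Hessian of `V` with the
matrix `hessMat`; `hessMat_eq_blocks` is its block decomposition, from which `charpoly_hessMat`
follows. Semidefiniteness and the kernel are read off the sums of squares above.
-/

open Polynomial

/-- The Casimir function `C₁` on `so(4) ≅ ℝ⁶`. -/
noncomputable def C1fn (p : Fin 6 → ℝ) : ℝ :=
  (1/2) * (p 0^2 + p 1^2 + p 2^2 + p 3^2 + p 4^2 + p 5^2)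

/-- The Casimir function `C₂` on `so(4) ≅ ℝ⁶`. -/
noncomputable def C2fn (p : Fin 6 → ℝ) : ℝ :=
  p 0 * p 3 + p 1 * p 4 + p 2 * p 5

/-- Mishchenko's additional first integral `I` of the SO(4) free rigid body. -/
noncomputable def Ifn (l1 l2 l3 l4 : ℝ) (p : Fin 6 → ℝ) : ℝ :=
  (l2^2+l3^2) * p 0^2 + (l1^2+l3^2) * p 1^2 + (l1^2+l2^2) * p 2^2 +
    (l1^2+l4^2) * p 3^2 + (l2^2+l4^2) * p 4^2 + (l3^2+l4^2) * p 5^2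

/-- The Hamiltonian of the SO(4) free rigid body on `so(4) ≅ ℝ⁶`. -/
noncomputable def Hfn (l1 l2 l3 l4 : ℝ) (p : Fin 6 → ℝ) : ℝ :=
  (1/2) * (p 0^2/(l2+l3) + p 1^2/(l1+l3) + p 2^2/(l1+l2) +
    p 3^2/(l1+l4) + p 4^2/(l2+l4) + p 5^2/(l3+l4))

/-- The energy–Casimir function `V = H + m₀C₁ + n₀C₂` with
`m₀ = n₀ = −1/(λ₁+λ₂+λ₃+λ₄)`. -/
noncomputable def Vfn (l1 l2 l3 l4 : ℝ) (p : Fin 6 → ℝ) : ℝ :=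
  Hfn l1 l2 l3 l4 p + (-(1/(l1+l2+l3+l4))) * C1fn p +
    (-(1/(l1+l2+l3+l4))) * C2fn p

/-- The point of `s₊` with parameters `(a₁,a₂,a₃)`. -/
noncomputable def sPlus (l1 l2 l3 l4 a₁ a₂ a₃ : ℝ) : Fin 6 → ℝ :=
  ![a₁/(l1+l4), a₂/(l2+l4), a₃/(l3+l4),
    a₁/(l2+l3), a₂/(l1+l3), a₃/(l1+l2)]

/-- The Hessian matrix of `V` at `p` (matrix of second partial derivatives). -/
noncomputable def HessV (l1 l2 l3 l4 : ℝ) (p : Fin 6 → ℝ) :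
    Matrix (Fin 6) (Fin 6) ℝ :=
  Matrix.of fun i j =>
    fderiv ℝ (fun q => fderiv ℝ (Vfn l1 l2 l3 l4) q (Pi.single j 1)) p
      (Pi.single i 1)

/-- The matrix of the quadratic form `2V`, which is the Hessian of `V` at every point. -/
noncomputable def hessMat (l1 l2 l3 l4 : ℝ) : Matrix (Fin 6) (Fin 6) ℝ :=
  let s := 1 / (l1 + l2 + l3 + l4)
  !![1/(l2+l3) - s, 0, 0, -s, 0, 0;
     0, 1/(l1+l3) - s, 0, 0, -s, 0;
     0, 0, 1/(l1+l2) - s, 0, 0, -s;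
     -s, 0, 0, 1/(l1+l4) - s, 0, 0;
     0, -s, 0, 0, 1/(l2+l4) - s, 0;
     0, 0, -s, 0, 0, 1/(l3+l4) - s]

open Matrix in
lemma fderiv_V (l1 l2 l3 l4 : ℝ) (q w : Fin 6 → ℝ) :
    fderiv ℝ (Vfn l1 l2 l3 l4) q w = (hessMat l1 l2 l3 l4 *ᵥ q) ⬝ᵥ w := by
  have f : ∀ i : Fin 6, HasFDerivAt (fun p : Fin 6 → ℝ => p i)
      (ContinuousLinearMap.proj (R := ℝ) (φ := fun _ : Fin 6 => ℝ) i) q :=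
    fun i => hasFDerivAt_apply i q
  have hH := ((((((((f 0).pow 2).mul_const (l2+l3)⁻¹).add
    (((f 1).pow 2).mul_const (l1+l3)⁻¹)).add
    (((f 2).pow 2).mul_const (l1+l2)⁻¹)).add
    (((f 3).pow 2).mul_const (l1+l4)⁻¹)).add
    (((f 4).pow 2).mul_const (l2+l4)⁻¹)).add
    (((f 5).pow 2).mul_const (l3+l4)⁻¹)).const_mul (1/2)
  have hC1 := (((((((f 0).pow 2).add ((f 1).pow 2)).add ((f 2).pow 2)).add
    ((f 3).pow 2)).add ((f 4).pow 2)).add ((f 5).pow 2)).const_mul (1/2)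
  have hC2 := (((f 0).mul (f 3)).add ((f 1).mul (f 4))).add ((f 2).mul (f 5))
  have hV := (hH.add (hC1.const_mul (-(1/(l1+l2+l3+l4))))).add
    (hC2.const_mul (-(1/(l1+l2+l3+l4))))
  have hV' : HasFDerivAt (Vfn l1 l2 l3 l4) _ q := hV
  rw [hV'.fderiv]
  simp [hessMat, Matrix.mulVec, dotProduct, Fin.sum_univ_six]
  ring

lemma hessV_eq (l1 l2 l3 l4 : ℝ) (p : Fin 6 → ℝ) :
    HessV l1 l2 l3 l4 p = hessMat l1 l2 l3 l4 := by
  ext i j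
  have hlin : (fun q => fderiv ℝ (Vfn l1 l2 l3 l4) q (Pi.single j 1)) =
      fun q => ((ContinuousLinearMap.proj (R := ℝ) (φ := fun _ : Fin 6 => ℝ) j).comp
        (LinearMap.toContinuousLinearMap (Matrix.toLin' (hessMat l1 l2 l3 l4)))) q := by
    funext q
    simp [fderiv_V]
  simp only [HessV, Matrix.of_apply, hlin]
  rw [ContinuousLinearMap.fderiv]
  have hsymm : hessMat l1 l2 l3 l4 j i = hessMat l1 l2 l3 l4 i j := by
    fin_cases i <;> fin_cases j <;> rfl
  simp [hsymm]

/-- The block of `hessMat` on the plane `(xₖ, yₖ)`, where `u`, `v` are the denominators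
of `xₖ²`, `yₖ²` in `2H`. -/
noncomputable def planeBlock (u v S : ℝ) : Matrix (Fin 2) (Fin 2) ℝ :=
  !![1/u - 1/S, -(1/S); -(1/S), 1/v - 1/S]

lemma charpoly_planeBlock {u v S : ℝ} (hu : 0 < u) (hv : 0 < v) (hS : S = u + v) :
    (planeBlock u v S).charpoly = X * (X - C ((u^2 + v^2) / (u * v * S))) := by
  subst hS
  have hS : u + v ≠ 0 := by positivity
  have hdet : (planeBlock u v (u + v)).det = 0 := by
    rw [planeBlock, Matrix.det_fin_two_of]
    field_simp
    ring
  have htr : (planeBlock u v (u + v)).trace = (u^2 + v^2) / (u * v * (u + v)) := by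
    rw [planeBlock, Matrix.trace_fin_two_of]
    field_simp
    ring
  rw [Matrix.charpoly_fin_two, hdet, htr, C_0]
  ring

/-- The pairing of coordinates `(0, k) ↦ xₖ`, `(1, k) ↦ yₖ`. -/
def coordEquiv : Fin 2 × Fin 3 ≃ Fin 6 := finProdFinEquiv

lemma hessMat_eq_blocks (l1 l2 l3 l4 : ℝ) :
    hessMat l1 l2 l3 l4 = Matrix.reindex coordEquiv coordEquiv
      (Matrix.blockDiagonal ![planeBlock (l2+l3) (l1+l4) (l1+l2+l3+l4),
        planeBlock (l1+l3) (l2+l4) (l1+l2+l3+l4),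
        planeBlock (l1+l2) (l3+l4) (l1+l2+l3+l4)]) := by
  rw [← Equiv.symm_apply_eq]
  ext ⟨i, k⟩ ⟨j, m⟩
  fin_cases i <;> fin_cases k <;> fin_cases j <;> fin_cases m <;> rfl

lemma charpoly_blockDiagonal {n o : Type*} [Fintype n] [DecidableEq n] [Fintype o] [DecidableEq o]
    (B : o → Matrix n n ℝ) :
    (Matrix.blockDiagonal B).charpoly = ∏ k, (B k).charpoly := by
  have h : (Matrix.blockDiagonal B).charmatrix =
      Matrix.blockDiagonal fun k => (B k).charmatrix := by
    ext ⟨i, k⟩ ⟨j, m⟩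
    by_cases hkm : k = m
    · subst hkm
      by_cases hij : i = j <;>
        simp [Matrix.blockDiagonal_apply, hij]
    · simp [Matrix.blockDiagonal_apply, hkm]
  simp only [Matrix.charpoly, h, Matrix.det_blockDiagonal]

lemma charpoly_hessMat {l1 l2 l3 l4 : ℝ}
    (hp12 : 0 < l1 + l2) (hp13 : 0 < l1 + l3) (hp14 : 0 < l1 + l4)
    (hp23 : 0 < l2 + l3) (hp24 : 0 < l2 + l4) (hp34 : 0 < l3 + l4) :
    (hessMat l1 l2 l3 l4).charpoly =
      X^3 * (X - C (((l1+l3)^2 + (l2+l4)^2) / ((l1+l3)*(l2+l4)*(l1+l2+l3+l4)))) *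
        (X - C (((l1+l4)^2 + (l2+l3)^2) / ((l1+l4)*(l2+l3)*(l1+l2+l3+l4)))) *
        (X - C (((l1+l2)^2 + (l3+l4)^2) / ((l1+l2)*(l3+l4)*(l1+l2+l3+l4)))) := by
  rw [hessMat_eq_blocks, Matrix.charpoly_reindex, charpoly_blockDiagonal, Fin.prod_univ_three]
  simp only [Matrix.cons_val]
  rw [charpoly_planeBlock hp23 hp14 (by ring), charpoly_planeBlock hp13 hp24 (by ring),
    charpoly_planeBlock hp12 hp34 (by ring), add_comm ((l2+l3)^2), mul_comm (l2+l3)]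
  ring

/-- The binary form with matrix `planeBlock u v (u + v)` is nonnegative, being
`(v x - u y)² / (u v (u + v))`. -/
lemma planeBlock_form_nonneg {u v S : ℝ} (hu : 0 < u) (hv : 0 < v) (hS : S = u + v) (x y : ℝ) :
    0 ≤ (1/u - 1/S) * x^2 - 2 * (1/S) * (x * y) + (1/v - 1/S) * y^2 := by
  subst hS
  have h : (1/u - 1/(u+v)) * x^2 - 2 * (1/(u+v)) * (x * y) + (1/v - 1/(u+v)) * y^2 =
      (v * x - u * y)^2 / (u * v * (u + v)) := by
    have : u + v ≠ 0 := by positivity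
    field_simp
    ring
  rw [h]
  positivity

lemma posSemidef_hessMat {l1 l2 l3 l4 : ℝ}
    (hp12 : 0 < l1 + l2) (hp13 : 0 < l1 + l3) (hp14 : 0 < l1 + l4)
    (hp23 : 0 < l2 + l3) (hp24 : 0 < l2 + l4) (hp34 : 0 < l3 + l4) :
    (hessMat l1 l2 l3 l4).PosSemidef := by
  refine Matrix.PosSemidef.of_dotProduct_mulVec_nonneg ?_ fun x => ?_
  · ext i j
    fin_cases i <;> fin_cases j <;> rfl
  · have h1 := planeBlock_form_nonneg (S := l1+l2+l3+l4) hp23 hp14 (by ring) (x 0) (x 3)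
    have h2 := planeBlock_form_nonneg (S := l1+l2+l3+l4) hp13 hp24 (by ring) (x 1) (x 4)
    have h3 := planeBlock_form_nonneg (S := l1+l2+l3+l4) hp12 hp34 (by ring) (x 2) (x 5)
    refine (add_nonneg (add_nonneg h1 h2) h3).trans_eq ?_
    simp [hessMat, Matrix.mulVec, dotProduct, Fin.sum_univ_six]
    ring

/-- `(a/v, a/u)` lies in the kernel of `planeBlock u v (u + v)`. -/
lemma planeBlock_kernel {u v S : ℝ} (hu : 0 < u) (hv : 0 < v) (hS : S = u + v) (a : ℝ) :
    (1/u - 1/S) * (a/v) - 1/S * (a/u) = 0 ∧ -(1/S * (a/v)) + (1/v - 1/S) * (a/u) = 0 := by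
  subst hS
  have : u + v ≠ 0 := by positivity
  constructor <;> (field_simp; ring)

/-- As `planeBlock u v (u + v)` has rank one, its first row already determines its kernel. -/
lemma planeBlock_kernel_conv {u v S : ℝ} (hu : 0 < u) (hv : 0 < v) (hS : S = u + v) {x y : ℝ}
    (h : (1/u - 1/S) * x - 1/S * y = 0) : y = v * x / u := by
  subst hS
  have : u + v ≠ 0 := by positivity
  field_simp at h ⊢
  linarith

open Matrix in
lemma hessMat_mulVec (l1 l2 l3 l4 : ℝ) (p : Fin 6 → ℝ) :
    hessMat l1 l2 l3 l4 *ᵥ p =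
      ![(1/(l2+l3) - 1/(l1+l2+l3+l4)) * p 0 - 1/(l1+l2+l3+l4) * p 3,
        (1/(l1+l3) - 1/(l1+l2+l3+l4)) * p 1 - 1/(l1+l2+l3+l4) * p 4,
        (1/(l1+l2) - 1/(l1+l2+l3+l4)) * p 2 - 1/(l1+l2+l3+l4) * p 5,
        -(1/(l1+l2+l3+l4) * p 0) + (1/(l1+l4) - 1/(l1+l2+l3+l4)) * p 3,
        -(1/(l1+l2+l3+l4) * p 1) + (1/(l2+l4) - 1/(l1+l2+l3+l4)) * p 4,
        -(1/(l1+l2+l3+l4) * p 2) + (1/(l3+l4) - 1/(l1+l2+l3+l4)) * p 5] := by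
  ext i
  fin_cases i <;> simp [hessMat, Matrix.mulVec, dotProduct, Fin.sum_univ_six] <;> ring

open Matrix in
lemma hessMat_mulVec_sPlus {l1 l2 l3 l4 : ℝ}
    (hp12 : 0 < l1 + l2) (hp13 : 0 < l1 + l3) (hp14 : 0 < l1 + l4)
    (hp23 : 0 < l2 + l3) (hp24 : 0 < l2 + l4) (hp34 : 0 < l3 + l4) (a₁ a₂ a₃ : ℝ) :
    hessMat l1 l2 l3 l4 *ᵥ sPlus l1 l2 l3 l4 a₁ a₂ a₃ = 0 := by
  have h1 := planeBlock_kernel (S := l1+l2+l3+l4) hp23 hp14 (by ring) a₁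
  have h2 := planeBlock_kernel (S := l1+l2+l3+l4) hp13 hp24 (by ring) a₂
  have h3 := planeBlock_kernel (S := l1+l2+l3+l4) hp12 hp34 (by ring) a₃
  rw [hessMat_mulVec]
  ext i
  fin_cases i
  exacts [h1.1, h2.1, h3.1, h1.2, h2.2, h3.2]

/-- The parametrization `(a₁, a₂, a₃) ↦ sPlus a₁ a₂ a₃` of `s₊` as a linear map. -/
noncomputable def sPlusLin (l1 l2 l3 l4 : ℝ) : (Fin 3 → ℝ) →ₗ[ℝ] (Fin 6 → ℝ) where
  toFun a := sPlus l1 l2 l3 l4 (a 0) (a 1) (a 2)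
  map_add' a b := by
    ext i
    fin_cases i <;> simp [sPlus, add_div]
  map_smul' c a := by
    ext i
    fin_cases i <;> simp [sPlus, mul_div_assoc]

lemma finrank_ker_hessMat {l1 l2 l3 l4 : ℝ}
    (hp12 : 0 < l1 + l2) (hp13 : 0 < l1 + l3) (hp14 : 0 < l1 + l4)
    (hp23 : 0 < l2 + l3) (hp24 : 0 < l2 + l4) (hp34 : 0 < l3 + l4) :
    Module.finrank ℝ (LinearMap.ker (Matrix.toLin' (hessMat l1 l2 l3 l4))) = 3 := by
  have hker : LinearMap.ker (Matrix.toLin' (hessMat l1 l2 l3 l4)) =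
      LinearMap.range (sPlusLin l1 l2 l3 l4) := by
    apply le_antisymm
    · intro p hp
      rw [LinearMap.mem_ker, Matrix.toLin'_apply, hessMat_mulVec] at hp
      have h1 := planeBlock_kernel_conv hp23 hp14 (by ring) (congrFun hp 0)
      have h2 := planeBlock_kernel_conv hp13 hp24 (by ring) (congrFun hp 1)
      have h3 := planeBlock_kernel_conv hp12 hp34 (by ring) (congrFun hp 2)
      refine ⟨![(l1+l4) * p 0, (l2+l4) * p 1, (l3+l4) * p 2], ?_⟩
      ext i
      fin_cases i
      exacts [mul_div_cancel_left₀ _ hp14.ne', mul_div_cancel_left₀ _ hp24.ne',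
        mul_div_cancel_left₀ _ hp34.ne', h1.symm, h2.symm, h3.symm]
    · rintro _ ⟨a, rfl⟩
      exact hessMat_mulVec_sPlus hp12 hp13 hp14 hp23 hp24 hp34 _ _ _
  have hinj : Function.Injective (sPlusLin l1 l2 l3 l4) := by
    intro a b hab
    have h0 : a 0 / (l1+l4) = b 0 / (l1+l4) := congrFun hab 0
    have h1 : a 1 / (l2+l4) = b 1 / (l2+l4) := congrFun hab 1
    have h2 : a 2 / (l3+l4) = b 2 / (l3+l4) := congrFun hab 2
    ext i
    fin_cases i
    exacts [(div_left_inj' hp14.ne').1 h0, (div_left_inj' hp24.ne').1 h1,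
      (div_left_inj' hp34.ne').1 h2]
  rw [hker, LinearMap.finrank_range_of_inj hinj, Module.finrank_fin_fun]

/-- (i) the gradient of `V = H + m₀C₁ + n₀C₂` vanishes at every
point of `s₊`; (ii) the (constant) Hessian matrix of `V` has characteristic
polynomial `t³(t−α₁)(t−α₂)(t−α₃)` with `α₁, α₂, α₃ > 0` as stated; in
particular it is positive semidefinite with three-dimensional kernel. -/
theorem stmt19 (l1 l2 l3 l4 : ℝ)
    (h12 : l2 < l1) (h23 : l3 < l2) (h34 : l4 < l3)
    (hp12 : 0 < l1 + l2) (hp13 : 0 < l1 + l3) (hp14 : 0 < l1 + l4)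
    (hp23 : 0 < l2 + l3) (hp24 : 0 < l2 + l4) (hp34 : 0 < l3 + l4) :
    let Sig := l1 + l2 + l3 + l4
    let α₁ := ((l1+l3)^2 + (l2+l4)^2) / ((l1+l3)*(l2+l4)*Sig)
    let α₂ := ((l1+l4)^2 + (l2+l3)^2) / ((l1+l4)*(l2+l3)*Sig)
    let α₃ := ((l1+l2)^2 + (l3+l4)^2) / ((l1+l2)*(l3+l4)*Sig)
    0 < Sig ∧
    (∀ a₁ a₂ a₃ : ℝ,
      fderiv ℝ (Vfn l1 l2 l3 l4) (sPlus l1 l2 l3 l4 a₁ a₂ a₃) = 0) ∧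
    0 < α₁ ∧ 0 < α₂ ∧ 0 < α₃ ∧
    (∀ p : Fin 6 → ℝ,
      (HessV l1 l2 l3 l4 p).charpoly =
        X^3 * (X - C α₁) * (X - C α₂) * (X - C α₃) ∧
      (HessV l1 l2 l3 l4 p).PosSemidef ∧
      Module.finrank ℝ
        (LinearMap.ker (Matrix.toLin' (HessV l1 l2 l3 l4 p))) = 3) := by
  intro Sig α₁ α₂ α₃
  have hS : 0 < Sig := by
    change 0 < l1 + l2 + l3 + l4
    linarith
  refine ⟨hS, fun a₁ a₂ a₃ => ?_, by positivity, by positivity, by positivity, fun p => ?_⟩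
  · ext1 w
    rw [fderiv_V, hessMat_mulVec_sPlus hp12 hp13 hp14 hp23 hp24 hp34, zero_dotProduct]
    rfl
  · rw [hessV_eq]
    exact ⟨charpoly_hessMat hp12 hp13 hp14 hp23 hp24 hp34,
      posSemidef_hessMat hp12 hp13 hp14 hp23 hp24 hp34,
      finrank_ker_hessMat hp12 hp13 hp14 hp23 hp24 hp34⟩
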